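/- Let σ > 0 and let K ⊆ ℝⁿ be a convex body with B_n ⊆ K ⊆ 4σ√n B_n. Let 0 < δ ≤ σ/(8√n), let f(x) = e^{−‖x‖²/(2σ²)}, and for x ∈ K define ℓ(x) = vol(K ∩ (x + δB_n))/vol(δB_n) and P_x(S) = (1/vol(K ∩ (x + δB_n))) ∫_{S ∩ K ∩ (x + δB_n)} min(1, f(y)/f(x)) dy. Let S, K∖S be a partition of K and let u ∈ S, v ∈ K∖S satisfy ‖u − v‖ < δ/√n, P_u(K∖S) ≤ ℓ(u)/(20e), and P_v(S) ≤ ℓ(v)/(20e). Then |ℓ(u)f(u) − ℓ(v)f(v)| / max{ℓ(u)f(u), ℓ(v)f(v)} ≥ 1/4. -/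

import Mathlib

open MeasureTheory Real Set Metric

/-!
Write `B(x)` for the ball of radius `δ` around `x`. Two bounds on the volume of
`M = K ∩ B(u) ∩ B(v)` are compared.

By Brunn–Minkowski (here a consequence of the Prékopa–Leindler inequality), the half sum of the
lunes `(K ∩ B(u)) \ B(v)` and `(K ∩ B(v)) \ B(u)` has at least the volume of the smaller lune.
Shrinking it about the midpoint of `u` and `v` by a suitable factor `1 - O(1/n)` moves it into `M`,
because `‖u - v‖ ≤ δ/√n`, and keeps at least a quarter of its volume. So `M` has at least a fifth of
the volume of the smaller of `K ∩ B(u)` and `K ∩ B(v)`.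

On the other hand `f` varies by a factor of at most `2` over one step, so proposals are accepted
with probability at least `1/2`, and each point of `M` is a crossing from `u` or from `v`. The two
crossing probabilities therefore bound `vol M / vol B(0)` by `(ℓ(u) ^ 2 + ℓ(v) ^ 2) / 20`, hence by
`(ℓ(u) + ℓ(v)) / 20`. Together, the smaller of `ℓ(u)`, `ℓ(v)` is at most a third of the larger,
which the factor `2` between `f(u)` and `f(v)` cannot make up for.
-/

open Filter Module Topology
open scoped ENNReal Pointwise

section BrunnMinkowskiReal

variable {A B : Set ℝ} {a b : ℝ}

theorem volume_add_volume_le_volume_add_of_isGreatest_of_isLeast {α β : ℝ}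
    (hα : IsGreatest A α) (hβ : IsLeast B β) : volume A + volume B ≤ volume (A + B) := by
  -- `A + β` and `α + B` both lie in `A + B` and meet only at `α + β`.
  have hA : volume A ≤ volume ((A + B) ∩ Iic (α + β)) := by
    rw [← measure_preimage_add_right volume β (_ ∩ _)]
    exact measure_mono fun x hx ↦ ⟨Set.add_mem_add hx hβ.1, add_le_add_left (hα.2 hx) β⟩
  have hB : volume B ≤ volume ((A + B) ∩ Ici (α + β)) := by
    rw [← measure_preimage_add volume α (_ ∩ _)]
    exact measure_mono fun y hy ↦ ⟨Set.add_mem_add hα.1 hy, add_le_add_right (hβ.2 hy) α⟩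
  calc volume A + volume B
      ≤ volume ((A + B) ∩ Iic (α + β)) + volume ((A + B) ∩ Ici (α + β)) := add_le_add hA hB
    _ = volume ((A + B) ∩ Iic (α + β)) + volume ((A + B) \ Iic (α + β)) := by
        rw [sdiff_eq, compl_Iic, measure_congr ((ae_eq_refl (A + B)).inter Ioi_ae_eq_Ici)]
    _ = volume (A + B) := measure_inter_add_sdiff _ measurableSet_Iic

theorem volume_add_volume_le_volume_add (hA : MeasurableSet A) (hB : MeasurableSet B)
    (hA₀ : A.Nonempty) (hB₀ : B.Nonempty) : volume A + volume B ≤ volume (A + B) := by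
  obtain ⟨x, hx⟩ := hA₀
  obtain ⟨y, hy⟩ := hB₀
  rw [hA.measure_eq_iSup_isCompact, hB.measure_eq_iSup_isCompact]
  simp only [iSup_and']
  refine ENNReal.biSup_add_biSup_le' ⟨∅, empty_subset A, isCompact_empty⟩
    ⟨∅, empty_subset B, isCompact_empty⟩ fun C hC D hD ↦ ?_
  obtain ⟨α, hα⟩ := (hC.2.insert x).exists_isGreatest (insert_nonempty x C)
  obtain ⟨β, hβ⟩ := (hD.2.insert y).exists_isLeast (insert_nonempty y D)
  calc volume C + volume D ≤ volume (insert x C) + volume (insert y D) := by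
        gcongr <;> exact subset_insert _ _
    _ ≤ volume (insert x C + insert y D) :=
        volume_add_volume_le_volume_add_of_isGreatest_of_isLeast hα hβ
    _ ≤ volume (A + B) :=
        measure_mono (add_subset_add (insert_subset hx hC.1) (insert_subset hy hD.1))

theorem ofReal_mul_volume_add_le_volume_smul_add_smul (ha : 0 < a) (hb : 0 < b)
    (hA : MeasurableSet A) (hB : MeasurableSet B) (hA₀ : A.Nonempty) (hB₀ : B.Nonempty) :
    ENNReal.ofReal a * volume A + ENNReal.ofReal b * volume B ≤ volume (a • A + b • B) := by
  have h := volume_add_volume_le_volume_add (hA.const_smul_of_ne_zero ha.ne')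
    (hB.const_smul_of_ne_zero hb.ne') hA₀.smul_set hB₀.smul_set
  rwa [Measure.addHaar_smul, Measure.addHaar_smul, finrank_self, pow_one, pow_one,
    abs_of_pos ha, abs_of_pos hb] at h

end BrunnMinkowskiReal

theorem lintegral_eq_lintegral_measure_ofReal_lt {X : Type*} [MeasurableSpace X] (μ : Measure X)
    [SFinite μ] {f : X → ℝ≥0∞} (hf : Measurable f) :
    ∫⁻ x, f x ∂μ = ∫⁻ t in Ioi (0 : ℝ), μ {x | ENNReal.ofReal t < f x} := by
  let s : Set (X × ℝ) := {p | ENNReal.ofReal p.2 < f p.1}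
  have hs : MeasurableSet s := measurableSet_lt (by fun_prop) (by fun_prop)
  have hvol (c : ℝ≥0∞) : volume.restrict (Ioi 0) {t : ℝ | ENNReal.ofReal t < c} = c := by
    rw [Measure.restrict_apply (measurableSet_lt (by fun_prop) (by fun_prop))]
    induction c with
    | top => simp
    | coe c =>
      suffices {t : ℝ | ENNReal.ofReal t < c} ∩ Ioi 0 = Ioo 0 (c : ℝ) by simp [this]
      ext t
      exact and_comm.trans (and_congr_right fun ht ↦ ENNReal.ofReal_lt_coe_iff (le_of_lt ht))
  calc ∫⁻ x, f x ∂μ = μ.prod (volume.restrict (Ioi 0)) s := by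
        rw [Measure.prod_apply hs]
        exact lintegral_congr fun x ↦ (hvol (f x)).symm
    _ = ∫⁻ t in Ioi (0 : ℝ), μ {x | ENNReal.ofReal t < f x} := Measure.prod_apply_symm hs

section PrekopaLeindler

variable {a b : ℝ}

theorem ofReal_mul_lintegral_add_le_of_min_le {f g h : ℝ → ℝ≥0∞} (ha : 0 < a) (hb : 0 < b)
    (hf : Measurable f) (hg : Measurable g) (hh : Measurable h) (hfg : ⨆ x, f x = ⨆ y, g y)
    (H : ∀ x y, min (f x) (g y) ≤ h (a • x + b • y)) :
    ENNReal.ofReal a * (∫⁻ x, f x) + ENNReal.ofReal b * (∫⁻ x, g x) ≤ ∫⁻ x, h x := by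
  have hmeas (k : ℝ → ℝ≥0∞) :
      Measurable fun t : ℝ ↦ volume {x | ENNReal.ofReal t < k x} :=
    Antitone.measurable fun s t hst ↦ measure_mono fun x hx ↦
      (ENNReal.ofReal_le_ofReal hst).trans_lt hx
  simp only [lintegral_eq_lintegral_measure_ofReal_lt volume, hf, hg, hh]
  rw [← lintegral_const_mul _ (hmeas f), ← lintegral_const_mul _ (hmeas g),
    ← lintegral_add_left ((hmeas f).const_mul _)]
  refine lintegral_mono fun t ↦ ?_
  -- The suprema being equal, the two superlevel sets are empty for the same levels.
  rcases lt_or_ge (ENNReal.ofReal t) (⨆ x, f x) with ht | ht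
  · refine (ofReal_mul_volume_add_le_volume_smul_add_smul ha hb
      (measurableSet_lt measurable_const hf) (measurableSet_lt measurable_const hg)
      (lt_iSup_iff.1 ht) (lt_iSup_iff.1 (ht.trans_eq hfg))).trans (measure_mono ?_)
    rintro _ ⟨_, ⟨x, hx, rfl⟩, _, ⟨y, hy, rfl⟩, rfl⟩
    exact (lt_min hx hy).trans_le (H x y)
  · have hf₀ : {x | ENNReal.ofReal t < f x} = ∅ :=
      eq_empty_of_forall_notMem fun x ↦ (iSup_le_iff.1 ht x).not_gt
    have hg₀ : {x | ENNReal.ofReal t < g x} = ∅ :=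
      eq_empty_of_forall_notMem fun x ↦ (iSup_le_iff.1 (hfg.symm.trans_le ht) x).not_gt
    simp [hf₀, hg₀]

theorem min_le_rpow_mul_rpow (ha : 0 ≤ a) (hb : 0 ≤ b) (hab : a + b = 1) (x y : ℝ≥0∞) :
    min x y ≤ x ^ a * y ^ b := by
  calc min x y = min x y ^ a * min x y ^ b := by
        rw [← ENNReal.rpow_add_of_nonneg a b ha hb, hab, ENNReal.rpow_one]
    _ ≤ x ^ a * y ^ b := by
        gcongr
        · exact min_le_left x y
        · exact min_le_right x y

theorem rpow_mul_rpow_le_ofReal_mul_add (ha : 0 < a) (hb : 0 < b) (hab : a + b = 1)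
    (x y : ℝ≥0∞) : x ^ a * y ^ b ≤ ENNReal.ofReal a * x + ENNReal.ofReal b * y := by
  have h := ENNReal.young_inequality (x ^ a) (y ^ b) (.inv_inv ha hb hab)
  rwa [ENNReal.rpow_rpow_inv ha.ne', ENNReal.rpow_rpow_inv hb.ne', ENNReal.ofReal_inv_of_pos ha,
    ENNReal.ofReal_inv_of_pos hb, ENNReal.div_eq_inv_mul, ENNReal.div_eq_inv_mul, inv_inv,
    inv_inv] at h

theorem rpow_mul_rpow_lintegral_le_of_iSup_ne_top {f g h : ℝ → ℝ≥0∞} (ha : 0 < a) (hb : 0 < b)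
    (hab : a + b = 1) (hf : Measurable f) (hg : Measurable g) (hh : Measurable h)
    (hf_top : ⨆ x, f x ≠ ∞) (hg_top : ⨆ y, g y ≠ ∞)
    (H : ∀ x y, f x ^ a * g y ^ b ≤ h (a • x + b • y)) :
    (∫⁻ x, f x) ^ a * (∫⁻ x, g x) ^ b ≤ ∫⁻ x, h x := by
  obtain ⟨α, hα⟩ : ∃ α, ⨆ x, f x = α := ⟨_, rfl⟩
  obtain ⟨β, hβ⟩ : ∃ β, ⨆ y, g y = β := ⟨_, rfl⟩
  rw [hα] at hf_top
  rw [hβ] at hg_top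
  rcases eq_or_ne α 0 with hα₀ | hα₀
  · simp [ENNReal.iSup_eq_zero.1 (hα.trans hα₀), ENNReal.zero_rpow_of_pos ha]
  rcases eq_or_ne β 0 with hβ₀ | hβ₀
  · simp [ENNReal.iSup_eq_zero.1 (hβ.trans hβ₀), ENNReal.zero_rpow_of_pos hb]
  have hαa : α ^ a ≠ 0 := by simp [hα₀, ha.le]
  have hβb : β ^ b ≠ 0 := by simp [hβ₀, hb.le]
  have hβb_top : β ^ b ≠ ∞ := ENNReal.rpow_ne_top_of_nonneg hb.le hg_top
  -- Dividing `f` by `α`, `g` by `β` and `h` by `α ^ a * β ^ b` makes both suprema equal to `1`.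
  have hdiv (x y : ℝ≥0∞) : (x / α) ^ a * (y / β) ^ b = x ^ a * y ^ b / (α ^ a * β ^ b) := by
    rw [ENNReal.div_rpow_of_nonneg _ _ ha.le, ENNReal.div_rpow_of_nonneg _ _ hb.le,
      ENNReal.mul_div_mul_comm (.inr hβb_top) (.inr hβb)]
  have hlintegral {k : ℝ → ℝ≥0∞} (hk : Measurable k) (c : ℝ≥0∞) :
      ∫⁻ x, k x / c = (∫⁻ x, k x) / c := by
    simp only [div_eq_mul_inv, lintegral_mul_const _ hk]
  have hnormalized := calc
    (∫⁻ x, f x) ^ a * (∫⁻ x, g x) ^ b / (α ^ a * β ^ b)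
      = (∫⁻ x, f x / α) ^ a * (∫⁻ x, g x / β) ^ b := by
        rw [hlintegral hf, hlintegral hg, hdiv]
    _ ≤ ENNReal.ofReal a * (∫⁻ x, f x / α) + ENNReal.ofReal b * (∫⁻ x, g x / β) :=
        rpow_mul_rpow_le_ofReal_mul_add ha hb hab _ _
    _ ≤ ∫⁻ x, h x / (α ^ a * β ^ b) := by
        refine ofReal_mul_lintegral_add_le_of_min_le ha hb (by fun_prop) (by fun_prop)
          (by fun_prop) ?_ fun x y ↦ ?_
        · rw [← ENNReal.iSup_div, ← ENNReal.iSup_div, hα, hβ,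
            ENNReal.div_self hα₀ hf_top, ENNReal.div_self hβ₀ hg_top]
        · refine (min_le_rpow_mul_rpow ha.le hb.le hab _ _).trans ?_
          rw [hdiv]
          gcongr
          exact H x y
    _ = (∫⁻ x, h x) / (α ^ a * β ^ b) := hlintegral hh _
  have hc₀ : α ^ a * β ^ b ≠ 0 := mul_ne_zero hαa hβb
  have hc_top : α ^ a * β ^ b ≠ ∞ := by finiteness
  rwa [ENNReal.div_le_iff hc₀ hc_top, ENNReal.div_mul_cancel hc₀ hc_top] at hnormalized

theorem tendsto_lintegral_min_natCast {X : Type*} [MeasurableSpace X] (μ : Measure X)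
    {f : X → ℝ≥0∞} (hf : Measurable f) :
    Tendsto (fun k : ℕ ↦ ∫⁻ x, min (f x) k ∂μ) atTop (𝓝 (∫⁻ x, f x ∂μ)) := by
  refine lintegral_tendsto_of_tendsto_of_monotone (fun k ↦ by fun_prop)
    (.of_forall fun x k l hkl ↦ min_le_min_left _ (Nat.cast_le.2 hkl)) (.of_forall fun x ↦ ?_)
  simpa using (tendsto_const_nhds (x := f x)).min ENNReal.tendsto_nat_nhds_top

/-- The measure `μ` satisfies the Prékopa–Leindler inequality with weights `a` and `b`. Stating it
for an arbitrary measure lets the inequality pass to products and along linear maps. -/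
def IsPrekopaLeindler {E : Type*} [AddCommGroup E] [Module ℝ E] [MeasurableSpace E] (a b : ℝ)
    (μ : Measure E) : Prop :=
  ∀ ⦃f g h : E → ℝ≥0∞⦄, Measurable f → Measurable g → Measurable h →
    (∀ x y, f x ^ a * g y ^ b ≤ h (a • x + b • y)) →
    (∫⁻ x, f x ∂μ) ^ a * (∫⁻ x, g x ∂μ) ^ b ≤ ∫⁻ x, h x ∂μ

theorem isPrekopaLeindler_volume_real (ha : 0 < a) (hb : 0 < b) (hab : a + b = 1) :
    IsPrekopaLeindler a b (volume : Measure ℝ) := by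
  intro f g h hf hg hh H
  rcases eq_or_ne (∫⁻ x, f x) 0 with hf₀ | hf₀
  · simp [hf₀, ENNReal.zero_rpow_of_pos ha]
  rcases eq_or_ne (∫⁻ x, g x) 0 with hg₀ | hg₀
  · simp [hg₀, ENNReal.zero_rpow_of_pos hb]
  have hlim {k : ℝ → ℝ≥0∞} (hk : Measurable k) (c : ℝ) :
      Tendsto (fun m : ℕ ↦ (∫⁻ x, min (k x) m) ^ c) atTop (𝓝 ((∫⁻ x, k x) ^ c)) :=
    (ENNReal.continuous_rpow_const.tendsto _).comp (tendsto_lintegral_min_natCast volume hk)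
  refine le_of_tendsto (ENNReal.Tendsto.mul (hlim hf a) (.inl ?_) (hlim hg b) (.inl ?_))
    (.of_forall fun m ↦ ?_)
  · simp [hf₀, ha.le]
  · simp [hg₀, hb.le]
  have htop (k : ℝ → ℝ≥0∞) : ⨆ x, min (k x) m ≠ ∞ :=
    ne_top_of_le_ne_top (ENNReal.natCast_ne_top m) (iSup_le fun x ↦ min_le_right (k x) m)
  refine rpow_mul_rpow_lintegral_le_of_iSup_ne_top ha hb hab (by fun_prop) (by fun_prop) hh
    (htop f) (htop g) fun x y ↦ le_trans ?_ (H x y)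
  gcongr <;> exact min_le_left _ _

namespace IsPrekopaLeindler

variable {E F : Type*} [AddCommGroup E] [Module ℝ E] [MeasurableSpace E]
  [AddCommGroup F] [Module ℝ F] [MeasurableSpace F] {μ : Measure E} {ν : Measure F}

theorem prod [SFinite ν] (hμ : IsPrekopaLeindler a b μ) (hν : IsPrekopaLeindler a b ν) :
    IsPrekopaLeindler a b (μ.prod ν) := by
  intro f g h hf hg hh H
  rw [lintegral_prod f hf.aemeasurable, lintegral_prod g hg.aemeasurable,
    lintegral_prod h hh.aemeasurable]
  exact hμ hf.lintegral_prod_right' hg.lintegral_prod_right' hh.lintegral_prod_right'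
    fun s t ↦ hν (hf.comp measurable_prodMk_left) (hg.comp measurable_prodMk_left)
      (hh.comp measurable_prodMk_left) fun x y ↦ H (s, x) (t, y)

theorem of_measurePreserving (hμ : IsPrekopaLeindler a b μ) (e : E →ₗ[ℝ] F)
    (he : MeasurePreserving e μ ν) : IsPrekopaLeindler a b ν := by
  intro f g h hf hg hh H
  rw [← he.lintegral_comp hf, ← he.lintegral_comp hg, ← he.lintegral_comp hh]
  refine hμ (hf.comp he.measurable) (hg.comp he.measurable) (hh.comp he.measurable) fun x y ↦ ?_
  simpa only [Function.comp_apply, map_add, map_smul] using H (e x) (e y)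

end IsPrekopaLeindler

theorem isPrekopaLeindler_volume_pi_fin (ha : 0 < a) (hb : 0 < b) (hab : a + b = 1) (n : ℕ) :
    IsPrekopaLeindler a b (volume : Measure (Fin n → ℝ)) := by
  induction n with
  | zero =>
    intro f g h _ _ _ H
    simpa [Measure.volume_pi_eq_dirac 0] using H 0 0
  | succ n ih =>
    have hcons : (MeasurableEquiv.piFinSuccAbove (fun _ : Fin (n + 1) ↦ ℝ) 0).symm =
        ⇑(Fin.consLinearEquiv ℝ fun _ : Fin (n + 1) ↦ ℝ).toLinearMap :=
      congr_arg DFunLike.coe (Fin.insertNthEquiv_zero fun _ : Fin (n + 1) ↦ ℝ)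
    refine ((isPrekopaLeindler_volume_real ha hb hab).prod ih).of_measurePreserving
      (Fin.consLinearEquiv ℝ fun _ ↦ ℝ).toLinearMap ?_
    rw [← hcons]
    exact (volume_preserving_piFinSuccAbove (fun _ : Fin (n + 1) ↦ ℝ) 0).symm

variable {E : Type*} [NormedAddCommGroup E] [InnerProductSpace ℝ E] [FiniteDimensional ℝ E]
  [MeasurableSpace E] [BorelSpace E]

theorem isPrekopaLeindler_volume (ha : 0 < a) (hb : 0 < b) (hab : a + b = 1) :
    IsPrekopaLeindler a b (volume : Measure E) := by
  let e := (stdOrthonormalBasis ℝ E).repr.symm.toLinearEquiv.toLinearMap ∘ₗ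
    (WithLp.linearEquiv 2 ℝ (Fin (finrank ℝ E) → ℝ)).symm.toLinearMap
  exact (isPrekopaLeindler_volume_pi_fin ha hb hab _).of_measurePreserving e
    ((stdOrthonormalBasis ℝ E).measurePreserving_repr_symm.comp
      (PiLp.volume_preserving_toLp _))

theorem rpow_mul_rpow_volume_le_volume_smul_add_smul {A B : Set E} (ha : 0 < a) (hb : 0 < b)
    (hab : a + b = 1) (hA : NullMeasurableSet A) (hB : NullMeasurableSet B) :
    volume A ^ a * volume B ^ b ≤ volume (a • A + b • B) := by
  obtain ⟨A', hA'A, hA', hA'_ae⟩ := hA.exists_measurable_subset_ae_eq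
  obtain ⟨B', hB'B, hB', hB'_ae⟩ := hB.exists_measurable_subset_ae_eq
  set C := toMeasurable volume (a • A + b • B)
  have hC : MeasurableSet C := measurableSet_toMeasurable _ _
  rw [← measure_congr hA'_ae, ← measure_congr hB'_ae, ← measure_toMeasurable (a • A + b • B),
    ← lintegral_indicator_one hA', ← lintegral_indicator_one hB', ← lintegral_indicator_one hC]
  refine isPrekopaLeindler_volume ha hb hab (measurable_one.indicator hA')
    (measurable_one.indicator hB') (measurable_one.indicator hC) fun x y ↦ ?_
  by_cases hx : x ∈ A'
  · by_cases hy : y ∈ B'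
    · have hxy : a • x + b • y ∈ C := subset_toMeasurable _ _
        (Set.add_mem_add (smul_mem_smul_set (hA'A hx)) (smul_mem_smul_set (hB'B hy)))
      simp [hx, hy, hxy]
    · simp [hy, ENNReal.zero_rpow_of_pos hb]
  · simp [hx, ENNReal.zero_rpow_of_pos ha]

end PrekopaLeindler

section BallOverlap

variable {E : Type*} [NormedAddCommGroup E] [InnerProductSpace ℝ E] {u v : E} {δ : ℝ}

theorem sq_dist_midpoint_le {y z : E} (hy : dist y u ≤ δ) (hz : dist z v ≤ δ)
    (hyv : dist y u ≤ dist y v) : dist (midpoint ℝ y z) u ^ 2 ≤ δ ^ 2 + dist u v ^ 2 := by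
  have hmid : dist (midpoint ℝ y z) u = ‖((y - u) - (u - v)) + (z - v)‖ / 2 := by
    rw [dist_eq_norm, midpoint_eq_smul_add,
      show (⅟2 : ℝ) • (y + z) - u = (⅟2 : ℝ) • (((y - u) - (u - v)) + (z - v)) by
        simp only [invOf_eq_inv]; module, norm_smul]
    norm_num [div_eq_inv_mul]
  have hyv' : ‖y - u‖ ≤ ‖(y - u) + (u - v)‖ := by simpa [dist_eq_norm] using hyv
  have hpar := parallelogram_law_with_norm ℝ (y - u) (u - v)
  have hpar' := parallelogram_law_with_norm ℝ ((y - u) - (u - v)) (z - v)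
  rw [dist_eq_norm] at hy hz
  rw [hmid, dist_eq_norm]
  nlinarith [norm_nonneg (y - u), norm_nonneg (z - v), sq_nonneg ‖(y - u) - (u - v) - (z - v)‖]

theorem lineMap_midpoint_mem_closedBall {w : E} {r : ℝ} (hδ : 0 ≤ δ) (hr : r ∈ Icc 0 1)
    (hw : dist w u ^ 2 ≤ δ ^ 2 + dist u v ^ 2)
    (huv : (1 + 3 * r) * dist u v ^ 2 ≤ 4 * (1 - r) * δ ^ 2) :
    AffineMap.lineMap (midpoint ℝ u v) w r ∈ closedBall u δ := by
  have hconv : ConvexOn ℝ univ fun x ↦ dist x u ^ 2 :=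
    (convexOn_dist u convex_univ).pow (fun x _ ↦ dist_nonneg) 2
  have hdist : dist (midpoint ℝ u v) u = dist u v / 2 := by
    rw [dist_midpoint_left, Real.norm_ofNat, div_eq_inv_mul]
  refine mem_closedBall.2 (abs_le_of_sq_le_sq' ?_ hδ).2
  calc dist (AffineMap.lineMap (midpoint ℝ u v) w r) u ^ 2
      ≤ (1 - r) * dist (midpoint ℝ u v) u ^ 2 + r * dist w u ^ 2 := by
        rw [AffineMap.lineMap_apply_module]
        exact hconv.2 (mem_univ _) (mem_univ _) (sub_nonneg.2 hr.2) hr.1 (sub_add_cancel 1 r)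
    _ ≤ (1 - r) * (dist u v / 2) ^ 2 + r * (δ ^ 2 + dist u v ^ 2) := by
        rw [hdist]
        gcongr
        exact hr.1
    _ ≤ δ ^ 2 := by linarith

theorem image_homothety_midpoint_subset {K : Set E} {r : ℝ} (hK : Convex ℝ K) (hu : u ∈ K)
    (hv : v ∈ K) (hδ : 0 ≤ δ) (hr : r ∈ Icc 0 1)
    (huv : (1 + 3 * r) * dist u v ^ 2 ≤ 4 * (1 - r) * δ ^ 2) :
    AffineMap.homothety (midpoint ℝ u v) r ''
        ((2⁻¹ : ℝ) • ((K ∩ closedBall u δ) \ closedBall v δ) +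
          (2⁻¹ : ℝ) • ((K ∩ closedBall v δ) \ closedBall u δ)) ⊆
      K ∩ closedBall u δ ∩ closedBall v δ := by
  rintro _ ⟨_, ⟨_, ⟨y, hy, rfl⟩, _, ⟨z, hz, rfl⟩, rfl⟩, rfl⟩
  have hyv : dist y u ≤ dist y v := hy.1.2.trans (not_le.1 hy.2).le
  have hzu : dist z v ≤ dist z u := hz.1.2.trans (not_le.1 hz.2).le
  have hmid : (2⁻¹ : ℝ) • y + (2⁻¹ : ℝ) • z = midpoint ℝ y z := by
    rw [midpoint_eq_smul_add, smul_add, invOf_eq_inv]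
  simp only [hmid, AffineMap.homothety_eq_lineMap]
  refine ⟨⟨hK.lineMap_mem (hK.midpoint_mem hu hv) (hK.midpoint_mem hy.1.1 hz.1.1) hr, ?_⟩, ?_⟩
  · exact lineMap_midpoint_mem_closedBall hδ hr (sq_dist_midpoint_le hy.1.2 hz.1.2 hyv) huv
  · rw [midpoint_comm, midpoint_comm y]
    rw [dist_comm] at huv
    exact lineMap_midpoint_mem_closedBall hδ hr (sq_dist_midpoint_le hz.1.2 hy.1.2 hzu) huv

variable [FiniteDimensional ℝ E] [MeasurableSpace E] [BorelSpace E] {K : Set E}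

theorem ofReal_pow_mul_min_volume_sdiff_le {r : ℝ} (hK : Convex ℝ K) (hu : u ∈ K) (hv : v ∈ K)
    (hδ : 0 ≤ δ) (hr : r ∈ Icc 0 1) (huv : (1 + 3 * r) * dist u v ^ 2 ≤ 4 * (1 - r) * δ ^ 2) :
    ENNReal.ofReal (r ^ finrank ℝ E) *
        min (volume ((K ∩ closedBall u δ) \ closedBall v δ))
          (volume ((K ∩ closedBall v δ) \ closedBall u δ)) ≤
      volume (K ∩ closedBall u δ ∩ closedBall v δ) := by
  set A := (K ∩ closedBall u δ) \ closedBall v δ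
  set B := (K ∩ closedBall v δ) \ closedBall u δ
  have hmeas (x y : E) : NullMeasurableSet ((K ∩ closedBall x δ) \ closedBall y δ) :=
    NullMeasurableSet.diff ((hK.inter (convex_closedBall x δ)).nullMeasurableSet volume)
      measurableSet_closedBall.nullMeasurableSet
  calc ENNReal.ofReal (r ^ finrank ℝ E) * min (volume A) (volume B)
      ≤ ENNReal.ofReal (r ^ finrank ℝ E) * volume ((2⁻¹ : ℝ) • A + (2⁻¹ : ℝ) • B) := by
        gcongr
        exact (min_le_rpow_mul_rpow (by norm_num) (by norm_num) (by norm_num) _ _).trans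
          (rpow_mul_rpow_volume_le_volume_smul_add_smul (by norm_num) (by norm_num) (by norm_num)
            (hmeas u v) (hmeas v u))
    _ = volume (AffineMap.homothety (midpoint ℝ u v) r '' ((2⁻¹ : ℝ) • A + (2⁻¹ : ℝ) • B)) := by
        rw [Measure.addHaar_image_homothety, abs_of_nonneg (pow_nonneg hr.1 _)]
    _ ≤ volume (K ∩ closedBall u δ ∩ closedBall v δ) :=
        measure_mono (image_homothety_midpoint_subset hK hu hv hδ hr huv)

theorem one_fourth_le_div_pow {n : ℕ} (hn : 0 < n) :
    1 / 4 ≤ ((4 * n - 1) / (4 * n + 3) : ℝ) ^ n := by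
  have hn' : (1 : ℝ) ≤ n := Nat.one_le_cast.2 hn
  have hlog : -(4 / 3) ≤ n * Real.log ((4 * n - 1) / (4 * n + 3)) := by
    calc -(4 / 3) ≤ n * (1 - ((4 * n - 1) / (4 * n + 3) : ℝ)⁻¹) := by
          rw [inv_div, one_sub_div (by linarith), mul_div_assoc', le_div_iff₀ (by linarith)]
          linarith
      _ ≤ n * Real.log ((4 * n - 1) / (4 * n + 3)) := by
          gcongr
          exact Real.one_sub_inv_le_log_of_pos (div_pos (by linarith) (by linarith))
  have hlog_four : Real.log (1 / 4) ≤ -(4 / 3) := by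
    rw [one_div, Real.log_inv, show (4 : ℝ) = 2 ^ 2 by norm_num, Real.log_pow]
    push_cast
    linarith [Real.log_two_gt_d9]
  have hpos : (0 : ℝ) < ((4 * n - 1) / (4 * n + 3)) ^ n :=
    pow_pos (div_pos (by linarith) (by linarith)) n
  refine (Real.log_le_log_iff (by norm_num) hpos).1 ?_
  rw [Real.log_pow]
  exact hlog_four.trans hlog

theorem min_volume_sdiff_closedBall_le (hK : Convex ℝ K) (hu : u ∈ K) (hv : v ∈ K)
    (hδ : 0 ≤ δ) (huv : finrank ℝ E * dist u v ^ 2 ≤ δ ^ 2) :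
    min (volume ((K ∩ closedBall u δ) \ closedBall v δ))
        (volume ((K ∩ closedBall v δ) \ closedBall u δ)) ≤
      4 * volume (K ∩ closedBall u δ ∩ closedBall v δ) := by
  rcases subsingleton_or_nontrivial E with _ | _
  · obtain rfl := Subsingleton.elim u v
    simp [sdiff_eq_empty.2 (inter_subset_right (s := K) (t := closedBall u δ))]
  set m := volume (K ∩ closedBall u δ ∩ closedBall v δ)
  set a := volume ((K ∩ closedBall u δ) \ closedBall v δ)
  set b := volume ((K ∩ closedBall v δ) \ closedBall u δ)
  have hn : (1 : ℝ) ≤ finrank ℝ E := Nat.one_le_cast.2 finrank_pos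
  set n := finrank ℝ E
  -- This is the `r` with `1 + 3 * r = 4 * n * (1 - r)`.
  set r : ℝ := (4 * n - 1) / (4 * n + 3) with hr
  have hab : ENNReal.ofReal (r ^ n) * min a b ≤ m := by
    have hr_nonneg : 0 ≤ r := div_nonneg (by linarith) (by linarith)
    have hr_le : r ≤ 1 := (div_le_one (by linarith)).2 (by linarith)
    have hr_eq : 1 + 3 * r = 4 * (1 - r) * n := by rw [hr]; field_simp; ring
    refine ofReal_pow_mul_min_volume_sdiff_le hK hu hv hδ ⟨hr_nonneg, hr_le⟩ ?_
    rw [hr_eq, mul_assoc]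
    exact mul_le_mul_of_nonneg_left huv (by linarith)
  calc min a b = 4 * (ENNReal.ofReal (1 / 4) * min a b) := by
        rw [← mul_assoc, ← ENNReal.ofReal_ofNat 4, ← ENNReal.ofReal_mul (by norm_num)]
        norm_num
    _ ≤ 4 * (ENNReal.ofReal (r ^ n) * min a b) := by
        gcongr
        exact one_fourth_le_div_pow finrank_pos
    _ ≤ 4 * m := by gcongr

theorem min_volume_inter_closedBall_le (hK : Convex ℝ K) (hu : u ∈ K) (hv : v ∈ K)
    (hδ : 0 ≤ δ) (huv : finrank ℝ E * dist u v ^ 2 ≤ δ ^ 2) :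
    min (volume (K ∩ closedBall u δ)) (volume (K ∩ closedBall v δ)) ≤
      5 * volume (K ∩ closedBall u δ ∩ closedBall v δ) := by
  have hsplit (x y : E) : volume (K ∩ closedBall x δ) =
      volume ((K ∩ closedBall x δ) \ closedBall y δ) +
        volume (K ∩ closedBall x δ ∩ closedBall y δ) :=
    ((add_comm _ _).trans (measure_inter_add_sdiff _ measurableSet_closedBall)).symm
  rw [hsplit u v, hsplit v u, inter_right_comm K (closedBall v δ), min_add_add_right]
  calc _ ≤ 4 * volume (K ∩ closedBall u δ ∩ closedBall v δ) +
        volume (K ∩ closedBall u δ ∩ closedBall v δ) := by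
        gcongr
        exact min_volume_sdiff_closedBall_le hK hu hv hδ huv
    _ = 5 * volume (K ∩ closedBall u δ ∩ closedBall v δ) := by ring

end BallOverlap

section SpeedyWalk

variable {E : Type*} [NormedAddCommGroup E] [InnerProductSpace ℝ E] [FiniteDimensional ℝ E]
  [MeasurableSpace E] [BorelSpace E] {K S : Set E} {δ : ℝ} {f : E → ℝ} {u v x : E}

/-- The local conductance `ℓ(x)`: the proportion of the ball of radius `δ` around `x` that lies in
`K`. By translation invariance the denominator is taken at the origin. -/
noncomputable def localConductance (K : Set E) (δ : ℝ) (x : E) : ℝ :=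
  volume.real (K ∩ closedBall x δ) / volume.real (closedBall (0 : E) δ)

/-- The probability `P_x(S)` that one step of the speedy walk on `K`, with step size `δ` and target
density proportional to `f`, moves from `x` into `S`. It has this meaning only for `x ∉ S`, because
the probability of a rejected step is left out. -/
noncomputable def speedyTransition (K : Set E) (δ : ℝ) (f : E → ℝ) (x : E) (S : Set E) : ℝ :=
  (∫ y in S ∩ K ∩ closedBall x δ, min 1 (f y / f x)) / volume.real (K ∩ closedBall x δ)

theorem volume_inter_closedBall_ne_top (A : Set E) (x : E) (δ : ℝ) :
    volume (A ∩ closedBall x δ) ≠ ∞ :=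
  (measure_lt_top_of_subset inter_subset_right measure_closedBall_lt_top.ne).ne

theorem localConductance_nonneg : 0 ≤ localConductance K δ x :=
  div_nonneg measureReal_nonneg measureReal_nonneg

theorem localConductance_le_one : localConductance K δ x ≤ 1 := by
  refine div_le_one_of_le₀ ?_ measureReal_nonneg
  rw [← Measure.addHaar_real_closedBall_center volume x]
  exact measureReal_mono inter_subset_right measure_closedBall_lt_top.ne

theorem localConductance_pos (hK : Convex ℝ K) (hK₀ : (interior K).Nonempty) (hx : x ∈ K)
    (hδ : 0 < δ) : 0 < localConductance K δ x := by
  have hx' : x ∈ closure (interior K) := by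
    rw [hK.closure_interior_eq_closure_of_nonempty_interior hK₀]
    exact subset_closure hx
  have hopen : IsOpen (ball x δ ∩ interior K) := isOpen_ball.inter isOpen_interior
  have hne : (ball x δ ∩ interior K).Nonempty :=
    mem_closure_iff.1 hx' _ isOpen_ball (mem_ball_self hδ)
  have hsub : ball x δ ∩ interior K ⊆ K ∩ closedBall x δ :=
    fun y hy ↦ ⟨interior_subset hy.2, ball_subset_closedBall hy.1⟩
  exact div_pos
    (ENNReal.toReal_pos ((hopen.measure_pos volume hne).trans_le (measure_mono hsub)).ne'
      (volume_inter_closedBall_ne_top K x δ))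
    (ENNReal.toReal_pos (measure_closedBall_pos volume 0 hδ).ne' measure_closedBall_lt_top.ne)

theorem mul_volume_div_le_speedyTransition_mul_localConductance {c : ℝ} (hf : Measurable f)
    (hc₀ : 0 ≤ c) (hc₁ : c ≤ 1) (hfx : 0 < f x)
    (hfc : ∀ y ∈ K ∩ closedBall x δ, c * f x ≤ f y) :
    c * (volume.real (S ∩ K ∩ closedBall x δ) / volume.real (closedBall (0 : E) δ)) ≤
      speedyTransition K δ f x S * localConductance K δ x := by
  set W := S ∩ K ∩ closedBall x δ
  set g : E → ℝ := fun y ↦ min 1 (f y / f x)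
  have hW_top : volume W ≠ ∞ := volume_inter_closedBall_ne_top (S ∩ K) x δ
  have hg : Measurable g := by fun_prop
  have hcg : ∀ᵐ y ∂volume.restrict W, c ≤ g y :=
    (ae_restrict_iff (measurableSet_le measurable_const hg)).2 <| .of_forall fun y hy ↦
      le_min hc₁ ((le_div_iff₀ hfx).2 (hfc y ⟨hy.1.2, hy.2⟩))
  have hg_int : IntegrableOn g W :=
    Measure.integrableOn_of_bounded (M := 1) hW_top hg.aestronglyMeasurable <|
      hcg.mono fun y hy ↦ (abs_of_nonneg (hc₀.trans hy)).trans_le (min_le_left _ _)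
  have hintegral : c * volume.real W ≤ ∫ y in W, g y := by
    calc c * volume.real W = ∫ _ in W, c := by rw [setIntegral_const, smul_eq_mul, mul_comm]
      _ ≤ ∫ y in W, g y := integral_mono_ae (integrableOn_const hW_top) hg_int hcg
  have hcancel : ∫ y in W, g y =
      speedyTransition K δ f x S * volume.real (K ∩ closedBall x δ) := by
    refine (div_mul_cancel_of_imp fun h ↦ ?_).symm
    have hW : volume W = 0 := measure_mono_null (inter_subset_inter_left _ inter_subset_right)
      ((measureReal_eq_zero_iff (volume_inter_closedBall_ne_top K x δ)).1 h)
    exact setIntegral_measure_zero g hW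
  rw [localConductance, mul_div_assoc', mul_div_assoc', ← hcancel]
  gcongr

theorem min_localConductance_le (hK : Convex ℝ K) (hu : u ∈ K) (hv : v ∈ K) (hδ : 0 ≤ δ)
    (huv : finrank ℝ E * dist u v ^ 2 ≤ δ ^ 2) :
    min (localConductance K δ u) (localConductance K δ v) ≤
      5 * (volume.real (K ∩ closedBall u δ ∩ closedBall v δ) /
        volume.real (closedBall (0 : E) δ)) := by
  have h := ENNReal.toReal_mono
    (ENNReal.mul_ne_top ENNReal.ofNat_ne_top (volume_inter_closedBall_ne_top _ v δ))
    (min_volume_inter_closedBall_le hK hu hv hδ huv)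
  rw [ENNReal.toReal_min (volume_inter_closedBall_ne_top K u δ)
    (volume_inter_closedBall_ne_top K v δ), ENNReal.toReal_mul, ENNReal.toReal_ofNat] at h
  rw [localConductance, localConductance, min_div_div_right measureReal_nonneg, mul_div_assoc']
  exact div_le_div_of_nonneg_right h measureReal_nonneg

theorem three_mul_min_localConductance_le_max (hK : Convex ℝ K) (hδ : 0 ≤ δ) (hf : Measurable f)
    (hf₀ : ∀ x ∈ K, 0 < f x) (hf₂ : ∀ x ∈ K, ∀ y ∈ K, dist x y ≤ δ → f x ≤ 2 * f y)
    (hu : u ∈ K) (hv : v ∈ K) (huv : finrank ℝ E * dist u v ^ 2 ≤ δ ^ 2)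
    (hPu : speedyTransition K δ f u (K \ S) ≤ localConductance K δ u / 40)
    (hPv : speedyTransition K δ f v S ≤ localConductance K δ v / 40) :
    3 * min (localConductance K δ u) (localConductance K δ v) ≤
      max (localConductance K δ u) (localConductance K δ v) := by
  have hcross {x : E} {T : Set E} (hx : x ∈ K)
      (hP : speedyTransition K δ f x T ≤ localConductance K δ x / 40) :
      volume.real (T ∩ K ∩ closedBall x δ) / volume.real (closedBall (0 : E) δ) ≤
        localConductance K δ x / 20 := by
    have h := mul_volume_div_le_speedyTransition_mul_localConductance (S := T) (c := 1 / 2) hf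
      (by norm_num) (by norm_num) (hf₀ x hx) fun y hy ↦ by
        linarith [hf₂ x hx y hy.1 (mem_closedBall'.1 hy.2)]
    have hℓ₀ : 0 ≤ localConductance K δ x := localConductance_nonneg
    have hℓ₁ : localConductance K δ x ≤ 1 := localConductance_le_one
    nlinarith
  have hcover : K ∩ closedBall u δ ∩ closedBall v δ ⊆
      ((K \ S) ∩ K ∩ closedBall u δ) ∪ (S ∩ K ∩ closedBall v δ) := by
    rintro y ⟨⟨hyK, hyu⟩, hyv⟩
    by_cases hyS : y ∈ S
    exacts [.inr ⟨⟨hyS, hyK⟩, hyv⟩, .inl ⟨⟨⟨hyK, hyS⟩, hyK⟩, hyu⟩]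
  have hoverlap : volume.real (K ∩ closedBall u δ ∩ closedBall v δ) /
      volume.real (closedBall (0 : E) δ) ≤
        localConductance K δ u / 20 + localConductance K δ v / 20 := by
    refine le_trans ?_ (add_le_add (hcross hu hPu) (hcross hv hPv))
    rw [← add_div]
    gcongr
    refine (measureReal_mono hcover ?_).trans (measureReal_union_le _ _)
    exact measure_union_ne_top (volume_inter_closedBall_ne_top _ u δ)
      (volume_inter_closedBall_ne_top _ v δ)
  have hmin := min_localConductance_le hK hu hv hδ huv
  linarith [min_add_max (localConductance K δ u) (localConductance K δ v)]

theorem one_third_le_abs_sub_div_max {a b p q : ℝ} (ha : 0 < a) (hb : 0 < b) (hp : 0 < p)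
    (hq : 0 < q) (hpq : p ≤ 2 * q) (hqp : q ≤ 2 * p) (hab : 3 * min a b ≤ max a b) :
    1 / 3 ≤ |a * p - b * q| / max (a * p) (b * q) := by
  wlog hle : a ≤ b generalizing a b p q
  · rw [abs_sub_comm, max_comm]
    exact this hb ha hq hp hqp hpq (by rwa [min_comm, max_comm]) (le_of_not_ge hle)
  rw [min_eq_left hle, max_eq_right hle] at hab
  have hlt : 3 * (a * p) ≤ 2 * (b * q) := by nlinarith
  have hbq : 0 < b * q := mul_pos hb hq
  rw [max_eq_right (by linarith), le_div_iff₀ hbq, abs_sub_comm]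
  linarith [le_abs_self (b * q - a * p)]

theorem div_sqrt_natCast_le (hδ : 0 ≤ δ) (n : ℕ) : δ / √n ≤ δ := by
  rcases n.eq_zero_or_pos with rfl | hn
  · simpa using hδ
  · exact div_le_self hδ (Real.one_le_sqrt.2 (Nat.one_le_cast.2 hn))

theorem speedy_density_gap_general (hK : Convex ℝ K) (hK₀ : (interior K).Nonempty) (hδ : 0 < δ)
    (hf : Measurable f) (hf₀ : ∀ x ∈ K, 0 < f x)
    (hf₂ : ∀ x ∈ K, ∀ y ∈ K, dist x y ≤ δ → f x ≤ 2 * f y)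
    (hu : u ∈ K) (hv : v ∈ K) (huv : dist u v ≤ δ / √(finrank ℝ E))
    (hPu : speedyTransition K δ f u (K \ S) ≤ localConductance K δ u / 40)
    (hPv : speedyTransition K δ f v S ≤ localConductance K δ v / 40) :
    1 / 3 ≤ |localConductance K δ u * f u - localConductance K δ v * f v| /
      max (localConductance K δ u * f u) (localConductance K δ v * f v) := by
  have huv_le : dist u v ≤ δ := huv.trans (div_sqrt_natCast_le hδ.le _)
  have huv_sq : finrank ℝ E * dist u v ^ 2 ≤ δ ^ 2 := by
    rw [← Real.sq_sqrt (finrank ℝ E).cast_nonneg, mul_comm, ← mul_pow]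
    gcongr
    exact mul_le_of_le_div₀ hδ.le (Real.sqrt_nonneg _) huv
  exact one_third_le_abs_sub_div_max (localConductance_pos hK hK₀ hu hδ)
    (localConductance_pos hK hK₀ hv hδ) (hf₀ u hu) (hf₀ v hv) (hf₂ u hu v hv huv_le)
    (hf₂ v hv u hu (by rwa [dist_comm]))
    (three_mul_min_localConductance_le_max hK hδ.le hf hf₀ hf₂ hu hv huv_sq hPu hPv)

end SpeedyWalk

theorem exp_neg_sq_norm_div_le {E : Type*} [SeminormedAddCommGroup E] {x y : E} {R δ σ : ℝ}
    (hx : ‖x‖ ≤ R) (hy : ‖y‖ ≤ R) (hxy : dist x y ≤ δ) :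
    rexp (-‖x‖ ^ 2 / (2 * σ ^ 2)) ≤ rexp (R * δ / σ ^ 2) * rexp (-‖y‖ ^ 2 / (2 * σ ^ 2)) := by
  rw [← Real.exp_add, Real.exp_le_exp, ← mul_div_mul_left (R * δ) (σ ^ 2) two_ne_zero, ← add_div]
  gcongr
  have hdiff : ‖y‖ - ‖x‖ ≤ δ := (norm_sub_norm_le y x).trans (by rwa [← dist_eq_norm, dist_comm])
  nlinarith [norm_nonneg x, norm_nonneg y, dist_nonneg (x := x) (y := y)]

theorem exp_neg_sq_norm_div_le_two_mul {E : Type*} [SeminormedAddCommGroup E] {x y : E}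
    {R δ σ : ℝ} (hx : ‖x‖ ≤ R) (hy : ‖y‖ ≤ R) (hxy : dist x y ≤ δ) (hR : 2 * (R * δ) ≤ σ ^ 2) :
    rexp (-‖x‖ ^ 2 / (2 * σ ^ 2)) ≤ 2 * rexp (-‖y‖ ^ 2 / (2 * σ ^ 2)) := by
  have hratio : R * δ / σ ^ 2 ≤ 1 / 2 :=
    div_le_of_le_mul₀ (sq_nonneg σ) (by norm_num) (by linarith)
  have hexp : rexp (R * δ / σ ^ 2) ≤ 2 :=
    (Real.le_log_iff_exp_le two_pos).1 (by linarith [Real.log_two_gt_d9])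
  exact (exp_neg_sq_norm_div_le hx hy hxy).trans (by gcongr)

/-- Lemma 5.2 of the paper: with the speedy-walk notation, if `u ∈ S`, `v ∈ K∖S` are
close (`‖u-v‖ < δ/√n`) and both have small crossing probability
(`P_u(K∖S) ≤ ℓ(u)/(20e)`, `P_v(S) ≤ ℓ(v)/(20e)`), then the weighted densities differ:
`|ℓ(u)f(u) - ℓ(v)f(v)| / max{ℓ(u)f(u), ℓ(v)f(v)} ≥ 1/4`. -/
theorem speedy_density_gap
    (n : ℕ) (σ δ : ℝ) (hσ : 0 < σ)
    (K : Set (EuclideanSpace ℝ (Fin n)))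
    (hKconv : Convex ℝ K) (hKcomp : IsCompact K)
    (hKball : closedBall (0 : EuclideanSpace ℝ (Fin n)) 1 ⊆ K)
    (hKbdd : K ⊆ closedBall (0 : EuclideanSpace ℝ (Fin n)) (4 * σ * Real.sqrt n))
    (hδ : 0 < δ) (hδσ : δ ≤ σ / (8 * Real.sqrt n))
    (f : EuclideanSpace ℝ (Fin n) → ℝ)
    (hf : ∀ x, f x = Real.exp (-‖x‖^2 / (2 * σ^2)))
    (ℓ : EuclideanSpace ℝ (Fin n) → ℝ)
    (hℓ : ∀ x, ℓ x = (volume (K ∩ closedBall x δ)).toReal /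
      (volume (closedBall (0 : EuclideanSpace ℝ (Fin n)) δ)).toReal)
    (P : EuclideanSpace ℝ (Fin n) → Set (EuclideanSpace ℝ (Fin n)) → ℝ)
    (hP : ∀ x S, P x S = (∫ y in S ∩ K ∩ closedBall x δ, min 1 (f y / f x)) /
      (volume (K ∩ closedBall x δ)).toReal)
    (S : Set (EuclideanSpace ℝ (Fin n))) (hS : MeasurableSet S) (hSK : S ⊆ K)
    (u v : EuclideanSpace ℝ (Fin n)) (hu : u ∈ S) (hv : v ∈ K \ S)
    (huv : ‖u - v‖ < δ / Real.sqrt n)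
    (hPu : P u (K \ S) ≤ ℓ u / (20 * Real.exp 1))
    (hPv : P v S ≤ ℓ v / (20 * Real.exp 1)) :
    (1 : ℝ) / 4 ≤ |ℓ u * f u - ℓ v * f v| / max (ℓ u * f u) (ℓ v * f v) := by
  obtain rfl : f = fun x ↦ rexp (-‖x‖ ^ 2 / (2 * σ ^ 2)) := funext hf
  obtain rfl : ℓ = localConductance K δ := funext hℓ
  obtain rfl : P = speedyTransition K δ fun x ↦ rexp (-‖x‖ ^ 2 / (2 * σ ^ 2)) := funext₂ hP
  have hinterior : (interior K).Nonempty :=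
    ⟨0, interior_mono hKball (ball_subset_interior_closedBall (mem_ball_self one_pos))⟩
  have hδσ' : 2 * (4 * σ * √n * δ) ≤ σ ^ 2 := by
    nlinarith [mul_le_of_le_div₀ hσ.le (by positivity) hδσ]
  have hcross (x) : localConductance K δ x / (20 * rexp 1) ≤ localConductance K δ x / 40 := by
    gcongr
    · exact localConductance_nonneg
    · linarith [Real.add_one_le_exp 1]
  have hgap := speedy_density_gap_general hKconv hinterior hδ (by fun_prop)
    (fun x _ ↦ Real.exp_pos _) (fun x hx y hy hxy ↦ exp_neg_sq_norm_div_le_two_mul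
      (mem_closedBall_zero_iff.1 (hKbdd hx)) (mem_closedBall_zero_iff.1 (hKbdd hy)) hxy hδσ')
    (hSK hu) hv.1 (by rw [dist_eq_norm, finrank_euclideanSpace_fin]; exact huv.le)
    (hPu.trans (hcross u)) (hPv.trans (hcross v))
  exact le_trans (by norm_num) hgap
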